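/- Suppose Q is a transition kernel on ℤ^d satisfying Assumption A.1 with constants (K,δ), and π : ℤ^d → (0,∞) is reversible for Q, i.e. π(x)Q(x,y) = π(y)Q(y,x) for all x,y, with c ≤ π(x) ≤ C for all x (0 < c ≤ C < ∞). Then there exist constants κ > 0 and κ' > 0, depending only on d, c, C, K and δ, such that (i) for every finite set A ⊂ ℤ^d, (π(A))^{1−1/d} ≤ κ · a(∂A), where π(A) := Σ_{x∈A} π(x), a(x,y) := π(x)Q(x,y), and a(∂A) := Σ_{x∈A} Σ_{y∉A} a(x,y); and (ii) for every f ∈ ℓ₀(ℤ^d), 𝓔_Q(f,f) ≥ κ' ‖f‖_{L²(π)}^{2+4/d} ‖f‖_{L¹(π)}^{−4/d}. -/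

import Mathlib

open scoped Classical

noncomputable section

/-- Points of `ℤ^d`. -/
abbrev Zd (d : ℕ) := Fin d → ℤ

/-- Euclidean norm on `ℤ^d`. -/
def eucNorm {d : ℕ} (v : Zd d) : ℝ := Real.sqrt (∑ i, ((v i : ℝ)) ^ 2)

/-- `n`-fold composition of a transition kernel. -/
def kerpow {d : ℕ} (Q : Zd d → Zd d → ℝ) : ℕ → Zd d → Zd d → ℝ
  | 0 => fun x y => if x = y then 1 else 0
  | m + 1 => fun x y => ∑' zz : Zd d, kerpow Q m x zz * Q zz y

/-- Adjoint of a kernel with respect to the measure `π`. -/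
def adjK {d : ℕ} (π : Zd d → ℝ) (Q : Zd d → Zd d → ℝ) (x y : Zd d) : ℝ :=
  π y * Q y x / π x

/-- Composition of two kernels. -/
def compK {d : ℕ} (Q₁ Q₂ : Zd d → Zd d → ℝ) (x y : Zd d) : ℝ :=
  ∑' zz : Zd d, Q₁ x zz * Q₂ zz y

/-- Dirichlet form of the kernel `Q` with respect to `π`. -/
def dirichlet {d : ℕ} (π : Zd d → ℝ) (Q : Zd d → Zd d → ℝ) (f : Zd d → ℝ) : ℝ :=
  (1 / 2) * ∑' p : Zd d × Zd d, (f p.2 - f p.1) ^ 2 * π p.1 * Q p.1 p.2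

/-- `L²(π)`-norm. -/
def l2norm {d : ℕ} (π : Zd d → ℝ) (f : Zd d → ℝ) : ℝ := Real.sqrt (∑' x, (f x) ^ 2 * π x)

/-- `L¹(π)`-norm. -/
def l1norm {d : ℕ} (π : Zd d → ℝ) (f : Zd d → ℝ) : ℝ := ∑' x, |f x| * π x

/-- Maximum norm on `ℤ^d`, as a natural number. -/
def maxNorm {d : ℕ} (v : Zd d) : ℕ := Finset.univ.sup fun i => (v i).natAbs

/-- Assumption A.1 with constants `(K, δ)`. -/
def AssumptionA1 {d : ℕ} (Q : Zd d → Zd d → ℝ) (K : ℕ) (δ : ℝ) : Prop :=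
  ∀ x y : Zd d, maxNorm (y - x) ≤ 3 * K + 1 →
    ∃ y' : Zd d, maxNorm (y' - y) ≤ K ∧ δ ≤ Q x y'


lemma finite_support_translate {d : ℕ} {F : Zd d → ℝ} (hF : (Function.support F).Finite)
    (z : Zd d) : (Function.support fun x => F (x + z)).Finite :=
  hF.preimage (add_left_injective z).injOn

lemma summable_of_finite_support_of_eq_zero {α : Type*} {F h : α → ℝ}
    (hF : (Function.support F).Finite) (hh : ∀ x, F x = 0 → h x = 0) : Summable h :=
  summable_of_hasFiniteSupport (hF.subset fun x hx hFx => hx (hh x hFx))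

lemma finite_support_translate_sub {d : ℕ} {F : Zd d → ℝ} (hF : (Function.support F).Finite)
    (z : Zd d) : (Function.support fun x => F (x + z) - F x).Finite :=
  ((finite_support_translate hF z).union hF).subset (Function.support_sub _ _)

lemma summable_translate_sub_rpow {d : ℕ} {F : Zd d → ℝ} (hF : (Function.support F).Finite)
    {p : ℝ} (hp : 1 ≤ p) (z : Zd d) : Summable fun x => |F (x + z) - F x| ^ p :=
  summable_of_finite_support_of_eq_zero (finite_support_translate_sub hF z) fun x hx => by
    rw [hx, abs_zero, Real.zero_rpow (by linarith)]

/-- The `ℓᵖ` modulus of continuity is subadditive in the translation vector. -/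
lemma translate_sub_Lp_add_le {d : ℕ} {F : Zd d → ℝ} (hF : (Function.support F).Finite)
    {p : ℝ} (hp : 1 ≤ p) (z w : Zd d) :
    (∑' x, |F (x + (z + w)) - F x| ^ p) ^ (1 / p) ≤
      (∑' x, |F (x + z) - F x| ^ p) ^ (1 / p) + (∑' x, |F (x + w) - F x| ^ p) ^ (1 / p) := by
  have hw := summable_translate_sub_rpow hF hp w
  have hshift : Summable fun x => |F (x + z + w) - F (x + z)| ^ p :=
    (Equiv.addRight z).summable_iff.mpr hw
  have hshift_eq : ∑' x, |F (x + z + w) - F (x + z)| ^ p = ∑' x, |F (x + w) - F x| ^ p :=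
    (Equiv.addRight z).tsum_eq fun x => |F (x + w) - F x| ^ p
  obtain ⟨hsum, hle⟩ := Real.Lp_add_le_tsum_of_nonneg hp
    (fun x => abs_nonneg (F (x + z) - F x)) (fun x => abs_nonneg (F (x + z + w) - F (x + z)))
    (summable_translate_sub_rpow hF hp z) hshift
  rw [hshift_eq] at hle
  refine le_trans ?_ hle
  refine Real.rpow_le_rpow (tsum_nonneg fun x => by positivity) ?_ (by positivity)
  refine (summable_translate_sub_rpow hF hp _).tsum_le_tsum (fun x => ?_) hsum
  refine Real.rpow_le_rpow (abs_nonneg _) ?_ (by linarith)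
  rw [← add_assoc, add_comm |F (x + z) - F x|]
  exact abs_sub_le _ _ _

/-- Translating by a vector with entries in `[0, R]` costs at most `d * R` unit steps. -/
lemma translate_sub_rpow_tsum_le {d : ℕ} {F : Zd d → ℝ} (hF : (Function.support F).Finite)
    {p : ℝ} (hp : 1 ≤ p) {g : ℝ} (hg : 0 ≤ g)
    (hstep : ∀ i, ∑' x, |F (x + Pi.single i 1) - F x| ^ p ≤ g ^ p)
    {R : ℕ} {z : Fin d → ℕ} (hz : ∀ i, z i ≤ R) :
    ∑' x, |F (x + fun i => (z i : ℤ)) - F x| ^ p ≤ (d * R * g) ^ p := by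
  have hp0 : 0 < p := by linarith
  set N : Zd d → ℝ := fun v => (∑' x, |F (x + v) - F x| ^ p) ^ (1 / p) with hN
  have hN0 : N 0 ≤ 0 := by
    simp [hN, Real.zero_rpow hp0.ne', Real.zero_rpow (inv_ne_zero hp0.ne')]
  have hadd : ∀ v w, N (v + w) ≤ N v + N w := translate_sub_Lp_add_le hF hp
  have hNe : ∀ i, N (Pi.single i 1) ≤ g := fun i => by
    refine (Real.rpow_le_rpow (tsum_nonneg fun x => by positivity) (hstep i)
      (by positivity)).trans ?_
    rw [one_div, Real.rpow_rpow_inv hg hp0.ne']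
  have hsingle : ∀ (i : Fin d) (n : ℕ), N (Pi.single i (n : ℤ)) ≤ n * g := by
    intro i n
    have h := Finset.le_sum_of_subadditive N hN0 hadd (Finset.range n)
      fun _ => Pi.single i (1 : ℤ)
    simp only [Finset.sum_const, Finset.card_range, nsmul_eq_mul] at h
    have heq : ((n : Zd d) * Pi.single i (1 : ℤ)) = Pi.single i (n : ℤ) := by
      ext j
      by_cases hj : j = i
      · subst hj; simp
      · simp [hj]
    rw [heq] at h
    exact h.trans (mul_le_mul_of_nonneg_left (hNe i) (Nat.cast_nonneg n))
  have hNz : N (fun i => (z i : ℤ)) ≤ d * R * g := by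
    have h := Finset.le_sum_of_subadditive N hN0 hadd Finset.univ
      fun i => Pi.single i (z i : ℤ)
    rw [Finset.univ_sum_single fun i => (z i : ℤ)] at h
    refine h.trans ((Finset.sum_le_card_nsmul _ _ (R * g) fun i _ => ?_).trans_eq ?_)
    · exact (hsingle i (z i)).trans
        (mul_le_mul_of_nonneg_right (by exact_mod_cast hz i) hg)
    · simp [mul_assoc]
  have hnn : 0 ≤ ∑' x, |F (x + fun i => (z i : ℤ)) - F x| ^ p :=
    tsum_nonneg fun x => by positivity
  have h := Real.rpow_le_rpow (Real.rpow_nonneg hnn _) hNz hp0.le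
  rwa [one_div, Real.rpow_inv_rpow hnn hp0.ne'] at h

/-- Expanding the square of the increment along a translation. -/
lemma le_tsum_translate_sub_sq {d : ℕ} {F : Zd d → ℝ} (hF : (Function.support F).Finite)
    (v : Zd d) :
    2 * ∑' x, F x ^ 2 - 2 * ∑' x, |F x| * |F (x + v)| ≤ ∑' x, (F (x + v) - F x) ^ 2 := by
  have hsq : Summable fun x => F x ^ 2 :=
    summable_of_finite_support_of_eq_zero hF fun x hx => by simp [hx]
  have hprod : Summable fun x => |F x| * |F (x + v)| :=
    summable_of_finite_support_of_eq_zero hF fun x hx => by simp [hx]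
  have hsv : Summable fun x => F (x + v) ^ 2 := (Equiv.addRight v).summable_iff (f := fun x => F x ^ 2) |>.mpr hsq
  have hsv_eq : ∑' x, F (x + v) ^ 2 = ∑' x, F x ^ 2 :=
    (Equiv.addRight v).tsum_eq fun x => F x ^ 2
  have hs2 : Summable fun x => (F (x + v) - F x) ^ 2 :=
    summable_of_finite_support_of_eq_zero (finite_support_translate_sub hF v)
      fun x hx => by rw [hx]; norm_num
  have h : ∑' x, (F (x + v) ^ 2 + F x ^ 2) ≤
      ∑' x, ((F (x + v) - F x) ^ 2 + 2 * (|F x| * |F (x + v)|)) := by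
    refine (hsv.add hsq).tsum_le_tsum (fun x => ?_) (hs2.add (hprod.mul_left 2))
    rw [← abs_mul]
    nlinarith [le_abs_self (F x * F (x + v))]
  rw [hsv.tsum_add hsq, hs2.tsum_add (hprod.mul_left 2), tsum_mul_left, hsv_eq] at h
  linarith

/-- Lower bound for the mean square displacement over a cube of side `R`. -/
lemma le_sum_cube_translate_sub_sq {d : ℕ} {F : Zd d → ℝ} (hF : (Function.support F).Finite)
    (R : ℕ) :
    2 * (R : ℝ) ^ d * ∑' x, F x ^ 2 - 2 * (∑' x, |F x|) ^ 2 ≤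
      ∑ z ∈ Fintype.piFinset fun _ : Fin d => Finset.range R,
        ∑' x, (F (x + fun i => (z i : ℤ)) - F x) ^ 2 := by
  set B := Fintype.piFinset fun _ : Fin d => Finset.range R with hB
  have hcard : (B.card : ℝ) = (R : ℝ) ^ d := by simp [hB]
  have habs : Summable fun x => |F x| :=
    summable_of_finite_support_of_eq_zero hF fun x hx => by simp [hx]
  have hprod : ∀ v : Zd d, Summable fun x => |F x| * |F (x + v)| := fun v =>
    summable_of_finite_support_of_eq_zero hF fun x hx => by simp [hx]
  have hcross : ∑ z ∈ B, ∑' x, |F x| * |F (x + fun i => (z i : ℤ))| ≤ (∑' x, |F x|) ^ 2 := by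
    rw [← Summable.tsum_finsetSum fun z _ => hprod _, sq, ← tsum_mul_right]
    refine Summable.tsum_le_tsum (fun x => ?_) (summable_sum fun z _ => hprod _)
      (habs.mul_right _)
    rw [← Finset.mul_sum]
    refine mul_le_mul_of_nonneg_left ?_ (abs_nonneg _)
    have hinj : Function.Injective fun z : Fin d → ℕ => x + fun i => (z i : ℤ) := by
      intro z w h
      ext i
      simpa using congrFun h i
    rw [← Finset.sum_image (f := fun y => |F y|) hinj.injOn]
    exact habs.sum_le_tsum _ fun y _ => abs_nonneg _
  have h := Finset.sum_le_sum fun z (_ : z ∈ B) =>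
    le_tsum_translate_sub_sq hF fun i => (z i : ℤ)
  rw [Finset.sum_sub_distrib, Finset.sum_const, nsmul_eq_mul, hcard, ← Finset.mul_sum] at h
  linarith

lemma exists_nat_le_pow_and_le_two_mul_rpow {d : ℕ} (hd : 0 < d) {t : ℝ} (ht : 1 ≤ t) :
    ∃ R : ℕ, t ≤ (R : ℝ) ^ d ∧ (R : ℝ) ≤ 2 * t ^ (1 / (d : ℝ)) := by
  have h1 : 1 ≤ t ^ (1 / (d : ℝ)) := Real.one_le_rpow ht (by positivity)
  refine ⟨⌈t ^ (1 / (d : ℝ))⌉₊, ?_, ?_⟩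
  · calc t = (t ^ (1 / (d : ℝ))) ^ d := by
          rw [one_div, Real.rpow_inv_natCast_pow (by linarith) hd.ne']
      _ ≤ _ := pow_le_pow_left₀ (by linarith) (Nat.le_ceil _) d
  · have := Nat.ceil_lt_add_one (zero_le_one.trans h1)
    linarith

/-- Isoperimetric inequality on `ℤ^d`, for the indicator function `F` of a nonempty set. -/
lemma lattice_isoperimetric {d : ℕ} (hd : 0 < d) {F : Zd d → ℝ}
    (hF : (Function.support F).Finite) (h01 : ∀ x, F x = 0 ∨ F x = 1) (hne : ∃ x, F x = 1)
    {G : ℝ} (hG : ∀ i, ∑' x, (F (x + Pi.single i 1) - F x) ^ 2 ≤ G) :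
    (∑' x, F x ^ 2) ^ (1 - 1 / (d : ℝ)) ≤ 4 * d * G := by
  set n := ∑' x, F x ^ 2 with hn
  have hd0 : (0 : ℝ) < d := by exact_mod_cast hd
  have hG0 : 0 ≤ G := (tsum_nonneg fun x => sq_nonneg _).trans (hG ⟨0, hd⟩)
  have habs : ∀ x, |F x| = F x ^ 2 := fun x => by rcases h01 x with h | h <;> simp [h]
  have hdiff : ∀ x y, |F y - F x| ^ (1 : ℝ) = (F y - F x) ^ 2 := fun x y => by
    rcases h01 x with h | h <;> rcases h01 y with h' | h' <;> simp [h, h']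
  have hn1 : 1 ≤ n := by
    obtain ⟨x, hx⟩ := hne
    have hs : Summable fun x => F x ^ 2 :=
      summable_of_finite_support_of_eq_zero hF fun x hx => by simp [hx]
    simpa [hx] using hs.le_tsum x fun y _ => sq_nonneg (F y)
  obtain ⟨R, hR, hR'⟩ := exists_nat_le_pow_and_le_two_mul_rpow hd (t := 2 * n) (by linarith)
  have hlow := le_sum_cube_translate_sub_sq hF R
  have hup : ∀ z ∈ Fintype.piFinset fun _ : Fin d => Finset.range R,
      ∑' x, (F (x + fun i => (z i : ℤ)) - F x) ^ 2 ≤ d * R * G := by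
    intro z hz
    simp only [← hdiff]
    have h := translate_sub_rpow_tsum_le hF le_rfl hG0 (R := R) (z := z)
      (fun i => by simpa only [hdiff, Real.rpow_one] using hG i)
      (fun i => (Finset.mem_range.mp (Fintype.mem_piFinset.mp hz i)).le)
    simpa using h
  have hup' := hlow.trans (Finset.sum_le_card_nsmul _ _ _ hup)
  simp only [habs, ← hn, Fintype.card_piFinset, Finset.card_range, Finset.prod_const,
    Finset.card_univ, Fintype.card_fin, nsmul_eq_mul, Nat.cast_pow] at hup'
  have hRd : 0 < (R : ℝ) ^ d := by linarith
  have hnR : n ≤ d * R * G := by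
    refine le_of_mul_le_mul_left ?_ hRd
    nlinarith
  have hpow : (2 * n) ^ (1 / (d : ℝ)) ≤ 2 * n ^ (1 / (d : ℝ)) := by
    rw [Real.mul_rpow (by norm_num) (by linarith)]
    refine mul_le_mul_of_nonneg_right ?_ (by positivity)
    refine Real.rpow_le_self_of_one_le (by norm_num) ?_
    rw [div_le_one hd0]
    exact_mod_cast hd
  have hn0 : 0 < n := by linarith
  have hnd : 0 < n ^ (1 / (d : ℝ)) := by positivity
  rw [Real.rpow_sub hn0, Real.rpow_one, div_le_iff₀ hnd]
  calc n ≤ d * R * G := hnR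
    _ ≤ d * (4 * n ^ (1 / (d : ℝ))) * G := by gcongr; linarith
    _ = _ := by ring

/-- Nash inequality on `ℤ^d`. -/
lemma lattice_nash {d : ℕ} (hd : 0 < d) {F : Zd d → ℝ}
    (hF : (Function.support F).Finite) (hpos : 0 < ∑' x, F x ^ 2)
    {G : ℝ} (hG : ∀ i, ∑' x, (F (x + Pi.single i 1) - F x) ^ 2 ≤ G) :
    (∑' x, F x ^ 2) ^ (1 + 2 / (d : ℝ)) ≤ 16 * d ^ 2 * G * (∑' x, |F x|) ^ (4 / (d : ℝ)) := by
  set u := ∑' x, F x ^ 2 with hu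
  set v := ∑' x, |F x| with hv
  have hd0 : (0 : ℝ) < d := by exact_mod_cast hd
  have hG0 : 0 ≤ G := (tsum_nonneg fun x => sq_nonneg _).trans (hG ⟨0, hd⟩)
  have hsabs : Summable fun x => |F x| :=
    summable_of_finite_support_of_eq_zero hF fun x hx => by simp [hx]
  have hssq : Summable fun x => F x ^ 2 :=
    summable_of_finite_support_of_eq_zero hF fun x hx => by simp [hx]
  have hv0 : 0 ≤ v := tsum_nonneg fun x => abs_nonneg _
  have huv : u ≤ v ^ 2 := by
    rw [sq v]
    nth_rewrite 1 [hv]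
    rw [← tsum_mul_right]
    refine hssq.tsum_le_tsum (fun x => ?_) (hsabs.mul_right _)
    rw [← sq_abs, sq]
    exact mul_le_mul_of_nonneg_left (hsabs.le_tsum x fun y _ => abs_nonneg _) (abs_nonneg _)
  have hvpos : 0 < v := by
    rcases hv0.eq_or_lt with h | h
    · rw [← h] at huv; norm_num at huv; linarith
    · exact h
  have ht : 1 ≤ 2 * v ^ 2 / u := by rw [le_div_iff₀ hpos]; linarith
  obtain ⟨R, hR, hR'⟩ := exists_nat_le_pow_and_le_two_mul_rpow hd ht
  have hlow := le_sum_cube_translate_sub_sq hF R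
  have hup : ∀ z ∈ Fintype.piFinset fun _ : Fin d => Finset.range R,
      ∑' x, (F (x + fun i => (z i : ℤ)) - F x) ^ 2 ≤ d ^ 2 * R ^ 2 * G := by
    intro z hz
    have h := translate_sub_rpow_tsum_le hF one_le_two (Real.sqrt_nonneg G) (R := R) (z := z)
      (fun i => by simpa only [Real.rpow_two, sq_abs, Real.sq_sqrt hG0] using hG i)
      (fun i => (Finset.mem_range.mp (Fintype.mem_piFinset.mp hz i)).le)
    simpa only [Real.rpow_two, sq_abs, mul_pow, Real.sq_sqrt hG0] using h
  have hup' := hlow.trans (Finset.sum_le_card_nsmul _ _ _ hup)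
  simp only [← hu, ← hv, Fintype.card_piFinset, Finset.card_range, Finset.prod_const,
    Finset.card_univ, Fintype.card_fin, nsmul_eq_mul, Nat.cast_pow] at hup'
  have hRd : 0 < (R : ℝ) ^ d := by linarith
  rw [div_le_iff₀ hpos] at hR
  have huR : u ≤ d ^ 2 * R ^ 2 * G := by
    refine le_of_mul_le_mul_left ?_ hRd
    nlinarith
  have hRsq : (R : ℝ) ^ 2 ≤ 16 * (v ^ (4 / (d : ℝ)) / u ^ (2 / (d : ℝ))) := by
    have h2 : (2 : ℝ) ^ (2 / (d : ℝ)) ≤ 4 := by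
      calc (2 : ℝ) ^ (2 / (d : ℝ)) ≤ 2 ^ (2 : ℝ) := by
            refine Real.rpow_le_rpow_of_exponent_le one_le_two ?_
            rw [div_le_iff₀ hd0]
            have : (1 : ℝ) ≤ d := by exact_mod_cast hd
            linarith
        _ = 4 := by norm_num
    have hsq : ((2 * v ^ 2 / u) ^ (1 / (d : ℝ))) ^ 2 =
        2 ^ (2 / (d : ℝ)) * (v ^ (4 / (d : ℝ)) / u ^ (2 / (d : ℝ))) := by
      have h₁ : 1 / (d : ℝ) * (2 : ℕ) = 2 / d := by push_cast; ring
      have h₂ : ((2 : ℕ) : ℝ) * (2 / d) = 4 / d := by push_cast; ring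
      rw [← Real.rpow_natCast, ← Real.rpow_mul (by positivity), h₁,
        Real.div_rpow (by positivity) hpos.le, Real.mul_rpow (by norm_num) (by positivity),
        ← Real.rpow_natCast v, ← Real.rpow_mul hv0, h₂, mul_div_assoc]
    calc (R : ℝ) ^ 2 ≤ (2 * (2 * v ^ 2 / u) ^ (1 / (d : ℝ))) ^ 2 :=
          pow_le_pow_left₀ (Nat.cast_nonneg R) hR' 2
      _ = 4 * (2 ^ (2 / (d : ℝ)) * (v ^ (4 / (d : ℝ)) / u ^ (2 / (d : ℝ)))) := by
          rw [mul_pow, hsq]; norm_num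
      _ ≤ 4 * (4 * (v ^ (4 / (d : ℝ)) / u ^ (2 / (d : ℝ)))) := by gcongr
      _ = _ := by ring
  have hud : 0 < u ^ (2 / (d : ℝ)) := by positivity
  rw [Real.rpow_add hpos, Real.rpow_one]
  calc u * u ^ (2 / (d : ℝ))
      ≤ d ^ 2 * (16 * (v ^ (4 / (d : ℝ)) / u ^ (2 / (d : ℝ)))) * G * u ^ (2 / (d : ℝ)) := by
        refine mul_le_mul_of_nonneg_right (huR.trans ?_) hud.le
        gcongr
    _ = _ := by field_simp

lemma maxNorm_le_iff {d : ℕ} {v : Zd d} {n : ℕ} : maxNorm v ≤ n ↔ ∀ i, |v i| ≤ (n : ℤ) := by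
  simp only [maxNorm, Finset.sup_le_iff, Finset.mem_univ, true_implies]
  exact forall_congr' fun i => by rw [Int.abs_eq_natAbs, Nat.cast_le]

/-- The box of side `2 * K + 1` centred at `(2 * K + 1) • k`. -/
def coarseBox {d : ℕ} (K : ℕ) (k : Zd d) : Finset (Zd d) :=
  Finset.Icc (fun i => (2 * K + 1) * k i - K) fun i => (2 * K + 1) * k i + K

lemma mem_coarseBox {d : ℕ} {K : ℕ} {k x : Zd d} :
    x ∈ coarseBox K k ↔ ∀ i, |x i - (2 * K + 1) * k i| ≤ K := by
  simp only [coarseBox, Finset.mem_Icc, Pi.le_def, ← forall_and]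
  refine forall_congr' fun i => ?_
  rw [abs_le]
  constructor <;> rintro ⟨_, _⟩ <;> constructor <;> linarith

lemma card_coarseBox {d : ℕ} (K : ℕ) (k : Zd d) : (coarseBox K k).card = (2 * K + 1) ^ d := by
  rw [coarseBox, Pi.card_Icc, Finset.prod_eq_pow_card (b := 2 * K + 1)]
  · simp
  · intro i _
    rw [Int.card_Icc]
    omega

lemma coarseBox_nonempty {d : ℕ} (K : ℕ) (k : Zd d) : (coarseBox K k).Nonempty :=
  ⟨fun i => (2 * K + 1) * k i, mem_coarseBox.mpr fun i => by simp⟩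

lemma eq_of_mem_coarseBox {d : ℕ} {K : ℕ} {k l x : Zd d} (hk : x ∈ coarseBox K k)
    (hl : x ∈ coarseBox K l) : k = l := by
  ext i
  have h₁ := abs_le.mp (mem_coarseBox.mp hk i)
  have h₂ := abs_le.mp (mem_coarseBox.mp hl i)
  rcases lt_trichotomy (k i) (l i) with h | h | h
  · nlinarith
  · exact h
  · nlinarith

lemma exists_mem_coarseBox {d : ℕ} (K : ℕ) (x : Zd d) : ∃ k, x ∈ coarseBox K k := by
  refine ⟨fun i => (x i + K) / (2 * K + 1), mem_coarseBox.mpr fun i => ?_⟩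
  have hpos : (0 : ℤ) < 2 * K + 1 := by positivity
  have h₁ := Int.emod_nonneg (x i + K) hpos.ne'
  have h₂ := Int.emod_lt_of_pos (x i + K) hpos
  have h₃ := Int.emod_add_mul_ediv (x i + K) (2 * K + 1)
  rw [abs_le]
  constructor <;> linarith

/-- Under Assumption A.1 every point has a `δ`-edge into every neighbouring box. -/
lemma AssumptionA1.exists_mem_coarseBox {d : ℕ} {Q : Zd d → Zd d → ℝ} {K : ℕ} {δ : ℝ}
    (hA : AssumptionA1 Q K δ) {k l x : Zd d} (hkl : ∀ i, |l i - k i| ≤ 1)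
    (hx : x ∈ coarseBox K k) : ∃ y ∈ coarseBox K l, δ ≤ Q x y := by
  obtain ⟨y, hy, hQ⟩ := hA x (fun i => (2 * K + 1) * l i) (maxNorm_le_iff.mpr fun i => by
    have h₁ := abs_le.mp (mem_coarseBox.mp hx i)
    have h₂ := abs_le.mp (hkl i)
    simp only [Pi.sub_apply]
    push_cast
    rw [abs_le]
    constructor <;> nlinarith)
  exact ⟨y, mem_coarseBox.mpr (maxNorm_le_iff.mp hy), hQ⟩

lemma summable_dirichlet {d : ℕ} {Q : Zd d → Zd d → ℝ} {π f : Zd d → ℝ}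
    (hQ : ∀ x y, 0 ≤ Q x y) (hQ1 : ∀ x, HasSum (fun y => Q x y) 1) (hπ : ∀ x, 0 < π x)
    (hrev : ∀ x y, π x * Q x y = π y * Q y x) (hf : (Function.support f).Finite) :
    Summable fun p : Zd d × Zd d => (f p.2 - f p.1) ^ 2 * π p.1 * Q p.1 p.2 := by
  have hfst : Summable fun p : Zd d × Zd d => f p.1 ^ 2 * (π p.1 * Q p.1 p.2) := by
    rw [summable_prod_of_nonneg fun p => mul_nonneg (sq_nonneg _)
      (mul_nonneg (hπ _).le (hQ _ _))]
    refine ⟨fun x => ((hQ1 x).summable.mul_left (π x)).mul_left (f x ^ 2), ?_⟩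
    exact summable_of_finite_support_of_eq_zero hf fun x hx => by simp [hx]
  have hsnd : Summable fun p : Zd d × Zd d => f p.2 ^ 2 * (π p.1 * Q p.1 p.2) :=
    hfst.prod_symm.congr fun p => by
      simp only [Prod.fst_swap, Prod.snd_swap]
      rw [hrev]
  refine Summable.of_nonneg_of_le (fun p => ?_) (fun p => ?_)
    ((hfst.add hsnd).mul_left 2)
  · exact mul_nonneg (mul_nonneg (sq_nonneg _) (hπ _).le) (hQ _ _)
  · have h := mul_nonneg (sq_nonneg (f p.1 + f p.2)) (mul_nonneg (hπ p.1).le (hQ p.1 p.2))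
    nlinarith

/-- Coarse graining: replacing `f` by the maxima of `|f|` over boxes keeps the `ℓ²` norm, does not
increase the `ℓ¹` norm, and its nearest-neighbour energy is controlled by the Dirichlet form. -/
lemma exists_coarse_grained {d : ℕ} {Q : Zd d → Zd d → ℝ} {π f : Zd d → ℝ} {c δ : ℝ} {K : ℕ}
    (hc : 0 < c) (hδ : 0 < δ)
    (hQ : ∀ x y, 0 ≤ Q x y) (hQ1 : ∀ x, HasSum (fun y => Q x y) 1) (hπ : ∀ x, 0 < π x)
    (hrev : ∀ x y, π x * Q x y = π y * Q y x) (hπc : ∀ x, c ≤ π x)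
    (hA : AssumptionA1 Q K δ) (hf : (Function.support f).Finite) :
    ∃ F : Zd d → ℝ, (Function.support F).Finite ∧ (∀ k, ∃ x, F k = |f x|) ∧
      (∀ x, ∃ k, |f x| ≤ F k) ∧
      ∑' k, |F k| ≤ ∑' x, |f x| ∧
      ∑' x, f x ^ 2 ≤ (2 * K + 1) ^ d * ∑' k, F k ^ 2 ∧
      ∀ i, ∑' k, (F (k + Pi.single i 1) - F k) ^ 2 ≤ 2 / (c * δ) * dirichlet π Q f := by
  choose X hX hmax using fun k : Zd d =>
    Finset.exists_max_image (coarseBox K k) (fun x => |f x|) (coarseBox_nonempty K k)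
  have hXinj : Function.Injective X := fun k l h =>
    eq_of_mem_coarseBox (hX k) (h ▸ hX l)
  have hF : (Function.support fun k => |f (X k)|).Finite :=
    (hf.preimage hXinj.injOn).subset fun k hk hfk => hk (by simp [hfk])
  choose b hb using fun x : Zd d => exists_mem_coarseBox K x
  refine ⟨fun k => |f (X k)|, hF, fun k => ⟨X k, rfl⟩, fun x => ⟨b x, hmax _ _ (hb x)⟩,
    ?_, ?_, fun i => ?_⟩
  · simp only [abs_abs]
    exact tsum_comp_le_tsum_of_inj
      (summable_of_finite_support_of_eq_zero hf fun x hx => by simp [hx] : Summable fun x => |f x|)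
      (fun x => abs_nonneg _) hXinj
  · have hs : Summable fun k => |f (X k)| ^ 2 :=
      summable_of_finite_support_of_eq_zero hF fun x hx => by rw [hx]; norm_num
    rw [tsum_eq_sum (s := hf.toFinset) fun x hx => by
      have : f x = 0 := by simpa using hx
      simp [this]]
    calc ∑ x ∈ hf.toFinset, f x ^ 2 ≤ ∑ x ∈ hf.toFinset, |f (X (b x))| ^ 2 := by
          refine Finset.sum_le_sum fun x _ => ?_
          rw [← sq_abs]
          exact pow_le_pow_left₀ (abs_nonneg _) (hmax _ _ (hb x)) 2
      _ = ∑ k ∈ hf.toFinset.image b, (hf.toFinset.filter fun x => b x = k).card •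
            |f (X k)| ^ 2 := Finset.sum_comp (fun k => |f (X k)| ^ 2) b
      _ ≤ ∑ k ∈ hf.toFinset.image b, (2 * K + 1) ^ d * |f (X k)| ^ 2 := by
          refine Finset.sum_le_sum fun k _ => ?_
          rw [nsmul_eq_mul]
          refine mul_le_mul_of_nonneg_right ?_ (by positivity)
          have hle : (hf.toFinset.filter fun x => b x = k).card ≤ (coarseBox K k).card :=
            Finset.card_le_card fun x hx => (Finset.mem_filter.mp hx).2 ▸ hb x
          rw [card_coarseBox] at hle
          exact_mod_cast hle
      _ ≤ _ := by
          rw [← Finset.mul_sum]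
          exact mul_le_mul_of_nonneg_left (hs.sum_le_tsum _ fun k _ => by positivity)
            (by positivity)
  · have hedge : ∀ k, ∃ p : Zd d × Zd d, p.1 ∈ coarseBox K k ∧ c * δ ≤ π p.1 * Q p.1 p.2 ∧
        (|f (X (k + Pi.single i 1))| - |f (X k)|) ^ 2 ≤ (f p.2 - f p.1) ^ 2 := by
      intro k
      have hweight : ∀ x y, δ ≤ Q x y → c * δ ≤ π x * Q x y := fun x y h =>
        mul_le_mul (hπc x) h hδ.le (hπ x).le
      have hstep : ∀ j, |(Pi.single i 1 : Zd d) j| ≤ 1 := fun j => by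
        by_cases hj : j = i
        · subst hj; simp
        · simp [hj]
      rcases le_total |f (X (k + Pi.single i 1))| |f (X k)| with h | h
      · obtain ⟨y, hy, hQy⟩ := hA.exists_mem_coarseBox (l := k + Pi.single i 1)
          (fun j => by simpa using hstep j) (hX k)
        refine ⟨(X k, y), hX k, hweight _ _ hQy, ?_⟩
        rw [sq_le_sq, abs_sub_comm, abs_of_nonneg (sub_nonneg.mpr h), abs_sub_comm]
        linarith [hmax _ y hy, abs_sub_abs_le_abs_sub (f (X k)) (f y)]
      · obtain ⟨y, hy, hQy⟩ := hA.exists_mem_coarseBox (l := k)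
          (fun j => by simpa using hstep j) (hX (k + Pi.single i 1))
        refine ⟨(y, X (k + Pi.single i 1)), hy, ?_, ?_⟩
        · rw [hrev]
          exact hweight _ _ hQy
        · rw [sq_le_sq, abs_of_nonneg (sub_nonneg.mpr h)]
          linarith [hmax _ y hy, abs_sub_abs_le_abs_sub (f (X (k + Pi.single i 1))) (f y)]
    choose P hPbox hPw hPsq using hedge
    have hPinj : Function.Injective P := fun k l h =>
      eq_of_mem_coarseBox (hPbox k) (h ▸ hPbox l)
    have hsum := summable_dirichlet hQ hQ1 hπ hrev hf
    have hnn : ∀ p : Zd d × Zd d, 0 ≤ (f p.2 - f p.1) ^ 2 * π p.1 * Q p.1 p.2 := fun p =>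
      mul_nonneg (mul_nonneg (sq_nonneg _) (hπ _).le) (hQ _ _)
    have hcδ : 0 < c * δ := mul_pos hc hδ
    have h : ∑' k, c * δ * (|f (X (k + Pi.single i 1))| - |f (X k)|) ^ 2 ≤
        ∑' p : Zd d × Zd d, (f p.2 - f p.1) ^ 2 * π p.1 * Q p.1 p.2 := by
      refine Summable.tsum_le_tsum_of_inj P hPinj (fun p _ => hnn p) (fun k => ?_) ?_ hsum
      · rw [mul_comm (c * δ), mul_assoc ((f (P k).2 - f (P k).1) ^ 2)]
        exact mul_le_mul (hPsq k) (hPw k) hcδ.le (sq_nonneg _)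
      · exact summable_of_finite_support_of_eq_zero
          (finite_support_translate_sub hF (Pi.single i 1)) fun k hk => by rw [hk]; norm_num
    rw [tsum_mul_left] at h
    rw [dirichlet, div_mul_eq_mul_div, le_div_iff₀ hcδ]
    linarith

/-- The Dirichlet form of an indicator function is the boundary weight of the set. -/
lemma dirichlet_indicator {d : ℕ} {Q : Zd d → Zd d → ℝ} {π : Zd d → ℝ}
    (hQ : ∀ x y, 0 ≤ Q x y) (hQ1 : ∀ x, HasSum (fun y => Q x y) 1) (hπ : ∀ x, 0 < π x)
    (hrev : ∀ x y, π x * Q x y = π y * Q y x) (A : Finset (Zd d)) :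
    dirichlet π Q (fun x => if x ∈ A then 1 else 0) =
      ∑ x ∈ A, ∑' y, if y ∈ A then 0 else π x * Q x y := by
  set f : Zd d → ℝ := fun x => if x ∈ A then 1 else 0 with hf
  have hfin : (Function.support f).Finite :=
    A.finite_toSet.subset fun x hx => by
      by_contra h
      exact hx (if_neg h)
  set B : Zd d × Zd d → ℝ := fun p =>
    if p.1 ∈ A then (if p.2 ∈ A then 0 else π p.1 * Q p.1 p.2) else 0 with hB
  have hsplit : ∀ p : Zd d × Zd d,
      (f p.2 - f p.1) ^ 2 * π p.1 * Q p.1 p.2 = B p + B p.swap := fun p => by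
    by_cases h₁ : p.1 ∈ A <;> by_cases h₂ : p.2 ∈ A <;> simp [hf, hB, h₁, h₂, hrev p.2 p.1]
  have hBnn : ∀ p, 0 ≤ B p := fun p => by
    simp only [hB]
    split_ifs <;> first | exact le_rfl | exact mul_nonneg (hπ _).le (hQ _ _)
  have hBs : Summable B :=
    (summable_dirichlet hQ hQ1 hπ hrev hfin).of_nonneg_of_le hBnn fun p => by
      rw [hsplit]
      linarith [hBnn p.swap]
  have hswap : ∑' p : Zd d × Zd d, B p.swap = ∑' p, B p := (Equiv.prodComm _ _).tsum_eq B
  rw [dirichlet, tsum_congr hsplit, hBs.tsum_add hBs.prod_symm, hswap, hBs.tsum_prod,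
    tsum_eq_sum (s := A) fun x hx => by simp [hB, hx]]
  rw [← two_mul, ← mul_assoc, one_div, inv_mul_cancel₀ two_ne_zero, one_mul]
  exact Finset.sum_congr rfl fun x hx => by simp [hB, hx]

theorem isoperimetric_and_nash_from_assumptionA1
    (d : ℕ) (hd : 0 < d) (c C δ : ℝ) (K : ℕ)
    (hc : 0 < c) (hcC : c ≤ C) (hδ : 0 < δ) :
    ∃ κ κ' : ℝ, 0 < κ ∧ 0 < κ' ∧
      ∀ (Q : Zd d → Zd d → ℝ) (π : Zd d → ℝ),
        (∀ x y, 0 ≤ Q x y) →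
        (∀ x, HasSum (fun y => Q x y) 1) →
        (∀ x, 0 < π x) →
        (∀ x y, π x * Q x y = π y * Q y x) →
        (∀ x, c ≤ π x ∧ π x ≤ C) →
        AssumptionA1 Q K δ →
        (∀ A : Finset (Zd d), A.Nonempty →
            (∑ x ∈ A, π x) ^ ((1 : ℝ) - 1 / (d : ℝ))
              ≤ κ * ∑ x ∈ A, ∑' y, if y ∈ A then 0 else π x * Q x y) ∧
        (∀ f : Zd d → ℝ, (Function.support f).Finite →
            κ' * l2norm π f ^ ((2 : ℝ) + 4 / (d : ℝ)) * l1norm π f ^ (-(4 : ℝ) / (d : ℝ))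
              ≤ dirichlet π Q f) := by
  have hC : 0 < C := hc.trans_le hcC
  have hcδ : 0 < c * δ := mul_pos hc hδ
  have hd0 : (0 : ℝ) < d := by exact_mod_cast hd
  set N : ℝ := (2 * K + 1) ^ d with hN
  have hN0 : 0 < N := by positivity
  set M : ℝ := (C * N) ^ ((1 : ℝ) + 2 / d) * (16 * d ^ 2 * (2 / (c * δ))) / c ^ (4 / (d : ℝ))
    with hM
  have hM0 : 0 < M := by positivity
  refine ⟨(C * N) ^ ((1 : ℝ) - 1 / d) * (4 * d * (2 / (c * δ))), M⁻¹, by positivity,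
    by positivity, fun Q π hQ hQ1 hπ hrev hπc hA => ⟨fun A hAne => ?_, fun f hf => ?_⟩⟩
  · set f : Zd d → ℝ := fun x => if x ∈ A then 1 else 0 with hfdef
    have hf : (Function.support f).Finite :=
      A.finite_toSet.subset fun x hx => by
        by_contra h
        exact hx (if_neg h)
    obtain ⟨F, hFfin, hFval, hFmax, -, hFsq, hFG⟩ :=
      exists_coarse_grained hc hδ hQ hQ1 hπ hrev (fun x => (hπc x).1) hA hf
    have hF01 : ∀ k, F k = 0 ∨ F k = 1 := fun k => by
      obtain ⟨x, hx⟩ := hFval k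
      by_cases h : x ∈ A <;> simp [hx, hfdef, h]
    have hFne : ∃ k, F k = 1 := by
      obtain ⟨x, hx⟩ := hAne
      obtain ⟨k, hk⟩ := hFmax x
      refine ⟨k, (hF01 k).resolve_left fun h0 => ?_⟩
      rw [h0] at hk
      norm_num [hfdef, hx] at hk
    have hcard : ∑' x, f x ^ 2 = A.card := by
      rw [tsum_eq_sum (s := A) fun x hx => by simp [hfdef, hx]]
      simp [hfdef]
    have hiso := lattice_isoperimetric hd hFfin hF01 hFne hFG
    rw [dirichlet_indicator hQ hQ1 hπ hrev A] at hiso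
    have hexp : 0 ≤ (1 : ℝ) - 1 / d := by
      rw [sub_nonneg, div_le_one hd0]
      exact_mod_cast hd
    have hmass : ∑ x ∈ A, π x ≤ C * N * ∑' k, F k ^ 2 := by
      calc ∑ x ∈ A, π x ≤ A.card • C := Finset.sum_le_card_nsmul _ _ _ fun x _ => (hπc x).2
        _ = C * ∑' x, f x ^ 2 := by rw [hcard, nsmul_eq_mul, mul_comm]
        _ ≤ C * (N * ∑' k, F k ^ 2) := mul_le_mul_of_nonneg_left hFsq hC.le
        _ = _ := by ring
    calc (∑ x ∈ A, π x) ^ ((1 : ℝ) - 1 / d)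
        ≤ (C * N * ∑' k, F k ^ 2) ^ ((1 : ℝ) - 1 / d) :=
          Real.rpow_le_rpow (Finset.sum_nonneg fun x _ => (hπ x).le) hmass hexp
      _ = (C * N) ^ ((1 : ℝ) - 1 / d) * (∑' k, F k ^ 2) ^ ((1 : ℝ) - 1 / d) :=
          Real.mul_rpow (by positivity) (tsum_nonneg fun k => sq_nonneg _)
      _ ≤ (C * N) ^ ((1 : ℝ) - 1 / d) * _ := mul_le_mul_of_nonneg_left hiso (by positivity)
      _ = _ := by ring
  · obtain ⟨F, hFfin, -, -, hFabs, hFsq, hFG⟩ :=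
      exists_coarse_grained hc hδ hQ hQ1 hπ hrev (fun x => (hπc x).1) hA hf
    set U := ∑' x, f x ^ 2 * π x with hU
    set V := ∑' x, |f x| * π x with hV
    set u := ∑' k, F k ^ 2 with hu
    set v := ∑' k, |F k| with hv
    set E := dirichlet π Q f with hE
    have hU0 : 0 ≤ U := tsum_nonneg fun x => mul_nonneg (sq_nonneg _) (hπ x).le
    have hV0 : 0 ≤ V := tsum_nonneg fun x => mul_nonneg (abs_nonneg _) (hπ x).le
    have hu0 : 0 ≤ u := tsum_nonneg fun k => sq_nonneg _
    have hv0 : 0 ≤ v := tsum_nonneg fun k => abs_nonneg _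
    have hE0 : 0 ≤ E := mul_nonneg (by norm_num)
      (tsum_nonneg fun p => mul_nonneg (mul_nonneg (sq_nonneg _) (hπ _).le) (hQ _ _))
    have hUu : U ≤ C * N * u := by
      calc U ≤ ∑' x, C * f x ^ 2 := by
            refine Summable.tsum_le_tsum (fun x => ?_)
              (summable_of_finite_support_of_eq_zero hf fun x hx => by simp [hx])
              (summable_of_finite_support_of_eq_zero hf fun x hx => by simp [hx])
            rw [mul_comm]
            exact mul_le_mul_of_nonneg_right (hπc x).2 (sq_nonneg _)
        _ = C * ∑' x, f x ^ 2 := tsum_mul_left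
        _ ≤ C * (N * u) := mul_le_mul_of_nonneg_left hFsq hC.le
        _ = _ := by ring
    have hvV : v ≤ V / c := by
      rw [le_div_iff₀ hc]
      calc v * c ≤ (∑' x, |f x|) * c := mul_le_mul_of_nonneg_right hFabs hc.le
        _ = ∑' x, |f x| * c := tsum_mul_right.symm
        _ ≤ V := by
            refine Summable.tsum_le_tsum (fun x => ?_)
              (summable_of_finite_support_of_eq_zero hf fun x hx => by simp [hx])
              (summable_of_finite_support_of_eq_zero hf fun x hx => by simp [hx])
            exact mul_le_mul_of_nonneg_left (hπc x).1 (abs_nonneg _)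
    have hl2 : l2norm π f ^ ((2 : ℝ) + 4 / d) = U ^ ((1 : ℝ) + 2 / d) := by
      rw [l2norm, ← hU, Real.sqrt_eq_rpow, ← Real.rpow_mul hU0]
      congr 1
      ring
    have hnash : u ^ ((1 : ℝ) + 2 / d) ≤ 16 * d ^ 2 * (2 / (c * δ) * E) * v ^ (4 / (d : ℝ)) := by
      rcases hu0.eq_or_lt with h | h
      · rw [← h, Real.zero_rpow (by positivity)]
        positivity
      · exact lattice_nash hd hFfin h hFG
    have hmain : U ^ ((1 : ℝ) + 2 / d) ≤ M * E * V ^ (4 / (d : ℝ)) := by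
      calc U ^ ((1 : ℝ) + 2 / d) ≤ (C * N * u) ^ ((1 : ℝ) + 2 / d) :=
            Real.rpow_le_rpow hU0 hUu (by positivity)
        _ = (C * N) ^ ((1 : ℝ) + 2 / d) * u ^ ((1 : ℝ) + 2 / d) :=
            Real.mul_rpow (by positivity) hu0
        _ ≤ (C * N) ^ ((1 : ℝ) + 2 / d) *
              (16 * d ^ 2 * (2 / (c * δ) * E) * v ^ (4 / (d : ℝ))) := by gcongr
        _ ≤ (C * N) ^ ((1 : ℝ) + 2 / d) *
              (16 * d ^ 2 * (2 / (c * δ) * E) * (V / c) ^ (4 / (d : ℝ))) := by gcongr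
        _ = M * E * V ^ (4 / (d : ℝ)) := by
            rw [Real.div_rpow hV0 hc.le, hM]
            ring
    rw [hl2, l1norm, ← hV, neg_div, Real.rpow_neg hV0]
    calc M⁻¹ * U ^ ((1 : ℝ) + 2 / d) * (V ^ (4 / (d : ℝ)))⁻¹
        ≤ M⁻¹ * (M * E * V ^ (4 / (d : ℝ))) * (V ^ (4 / (d : ℝ)))⁻¹ := by gcongr
      _ = E * (V ^ (4 / (d : ℝ)) * (V ^ (4 / (d : ℝ)))⁻¹) := by field_simp
      _ ≤ E * 1 := mul_le_mul_of_nonneg_left mul_inv_le_one hE0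
      _ = E := mul_one E

end
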